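/- arXiv:2301.01857 — 4 statements merged into one kernel-verified Lean document; each statement's English description precedes it below -/
import Mathlib

section
/- Let F be a field, V a finite-dimensional F-vector space, and τ : V → V an F-linear endomorphism whose minimal polynomial is equal to its characteristic polynomial. Then V has only finitely many τ-invariant subspaces, i.e. the set of F-subspaces W ⊆ V with τ(W) ⊆ W is finite. -/
/-!
Regard `V` as an `F[X]`-module with `X` acting as `τ`. The structure theorem over the principal
ideal domain `F[X]` gives a vector `v` whose annihilator is that of all of `V`, namely the ideal
generated by the minimal polynomial (`exists_aeval_apply_eq_zero_iff`). Since the minimal polynomial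
has degree `dim V`, the map `p ↦ p(τ) v` is injective on polynomials of degree less than `dim V`,
hence surjective by a dimension count (`exists_cyclic_vector`). An invariant subspace `W` is thus
determined by the ideal `{p | p(τ) v ∈ W}`, which contains the minimal polynomial. As `F[X]` is a
Dedekind domain, only finitely many ideals contain a given nonzero polynomial.
-/

open Polynomial in
/-- Some vector has the minimal polynomial of `τ` as its local minimal polynomial. -/
theorem exists_aeval_apply_eq_zero_iff {F V : Type*} [Field F] [AddCommGroup V] [Module F V]
    [FiniteDimensional F V] (τ : V →ₗ[F] V) :
    ∃ v : V, ∀ p : F[X], aeval τ p v = 0 ↔ minpoly F τ ∣ p := by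
  obtain ⟨x, hx⟩ := Module.exists_ker_toSpanSingleton_eq_annihilator
    (R := F[X]) (M := Module.AEval F V τ)
  refine ⟨(Module.AEval.of F V τ).symm x, fun p => ?_⟩
  have h : p ∈ LinearMap.ker (LinearMap.toSpanSingleton F[X] _ x) ↔ minpoly F τ ∣ p := by
    rw [hx, Module.AEval.annihilator_eq_ker_aeval, RingHom.mem_ker, minpoly.dvd_iff]
  rw [← h, LinearMap.mem_ker, LinearMap.toSpanSingleton_apply,
    ← (Module.AEval.of F V τ).symm.map_eq_zero_iff, Module.AEval.of_symm_smul]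
  rfl

open Polynomial in
theorem exists_cyclic_vector {F V : Type*} [Field F] [AddCommGroup V] [Module F V]
    [FiniteDimensional F V] (τ : V →ₗ[F] V) (hcyc : minpoly F τ = LinearMap.charpoly τ) :
    ∃ v : V, ∀ w : V, ∃ p : F[X], aeval τ p v = w := by
  obtain ⟨v, hv⟩ := exists_aeval_apply_eq_zero_iff τ
  refine ⟨v, fun w => ?_⟩
  let n := Module.finrank F V
  let φ : degreeLT F n →ₗ[F] V :=
    (LinearMap.applyₗ v ∘ₗ (aeval τ).toLinearMap) ∘ₗ (degreeLT F n).subtype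
  have hφ (p : degreeLT F n) : φ p = aeval τ (p : F[X]) v := rfl
  have hdeg : (minpoly F τ).degree = n := by
    rw [hcyc, degree_eq_natDegree (LinearMap.charpoly_monic τ).ne_zero,
      LinearMap.charpoly_natDegree]
  have hinj : Function.Injective φ := by
    rw [injective_iff_map_eq_zero]
    rintro ⟨p, hp⟩ h
    rw [hφ, hv] at h
    rw [mem_degreeLT, ← hdeg] at hp
    exact Subtype.ext (eq_zero_of_dvd_of_degree_lt h hp)
  have : FiniteDimensional F (degreeLT F n) := Module.Finite.equiv (degreeLTEquiv F n).symm
  have hrank : Module.finrank F (degreeLT F n) = Module.finrank F V := by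
    rw [(degreeLTEquiv F n).finrank_eq, Module.finrank_fin_fun]
  obtain ⟨p, hp⟩ := (LinearMap.injective_iff_surjective_of_finrank_eq_finrank hrank).1 hinj w
  exact ⟨p, hp⟩

open Polynomial in
theorem aeval_apply_mem_of_invariant {F V : Type*} [Field F] [AddCommGroup V] [Module F V]
    {τ : V →ₗ[F] V} {W : Submodule F V} (hW : ∀ x ∈ W, τ x ∈ W) (p : F[X]) {x : V} (hx : x ∈ W) :
    aeval τ p x ∈ W := by
  induction p using Polynomial.induction_on' with
  | add p q hp hq => simpa using W.add_mem hp hq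
  | monomial n a =>
    have hpow : (τ ^ n) x ∈ W := by
      induction n with
      | zero => simpa
      | succ n ih => rw [pow_succ', Module.End.mul_apply]; exact hW _ ih
    simpa [aeval_monomial, Module.algebraMap_end_apply] using W.smul_mem a hpow

open Polynomial in
/-- The polynomials sending `v` into the invariant subspace `W`, as an ideal of `F[X]`. -/
def conductorIdeal {F V : Type*} [Field F] [AddCommGroup V] [Module F V]
    (τ : V →ₗ[F] V) (v : V) (W : Submodule F V) (hW : ∀ x ∈ W, τ x ∈ W) : Ideal F[X] where
  carrier := {p | aeval τ p v ∈ W}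
  zero_mem' := by simp
  add_mem' {p q} hp hq := by simpa using W.add_mem hp hq
  smul_mem' p q hq := by
    simpa using aeval_apply_mem_of_invariant hW p hq

/-- Let `F` be a field, `V` a finite-dimensional `F`-vector space and
`τ : V → V` an `F`-linear endomorphism whose minimal polynomial equals its characteristic
polynomial.  Then `V` has only finitely many `τ`-invariant subspaces. -/
theorem stmt3 {F V : Type*} [Field F] [AddCommGroup V] [Module F V] [FiniteDimensional F V]
    (τ : V →ₗ[F] V) (hcyc : minpoly F τ = LinearMap.charpoly τ) :
    {W : Submodule F V | ∀ x ∈ W, τ x ∈ W}.Finite := by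
  obtain ⟨v, hv⟩ := exists_cyclic_vector τ hcyc
  have hne : Ideal.span {minpoly F τ} ≠ 0 := by
    simpa using minpoly.ne_zero (LinearMap.isIntegral τ)
  let _ := UniqueFactorizationMonoid.fintypeSubtypeDvd _ hne
  let f : {W : Submodule F V | ∀ x ∈ W, τ x ∈ W} →
      {I : Ideal (Polynomial F) // I ∣ Ideal.span {minpoly F τ}} := fun W =>
    ⟨conductorIdeal τ v W.1 W.2, by
      rw [Ideal.dvd_span_singleton]
      change Polynomial.aeval τ (minpoly F τ) v ∈ W.1
      simp⟩
  refine Set.finite_coe_iff.1 (Finite.of_injective f ?_)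
  intro W₁ W₂ h
  ext w
  obtain ⟨p, rfl⟩ := hv w
  exact SetLike.ext_iff.1 (congrArg Subtype.val h) p
end

section
/- Let F be a field, V a finite-dimensional F-vector space, and τ : V → V an F-linear endomorphism whose minimal polynomial is equal to its characteristic polynomial. Then every τ-invariant subspace W of V is of the form W = ker q(τ) for some monic polynomial q ∈ F[X] dividing the characteristic polynomial of τ. -/
/-!
Let `q` be the characteristic polynomial of `τ` restricted to `W`, put `K = ker q(τ)`, and let `s` be
the characteristic polynomial of the endomorphism induced by `τ` on `V ⧸ K`. By Cayley–Hamilton on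
`W`, `W ≤ K`; by Cayley–Hamilton on `V ⧸ K`, `s(τ)` maps `V` into `K`, so `(q * s)(τ) = 0`. Hence the
minimal polynomial of `τ`, which has degree `dim V` by hypothesis, divides `q * s`, whose degree is
`dim W + dim V - dim K`. This forces `dim K ≤ dim W`, so `W = K`, and then `q * s` is monic of degree
`dim V`, so it equals the characteristic polynomial of `τ`. No cyclic vector is needed.
-/

lemma aeval_restrict_coe {F V : Type*} [Field F] [AddCommGroup V] [Module F V]
    (τ : V →ₗ[F] V) (W : Submodule F V) (hW : ∀ x ∈ W, τ x ∈ W) (p : Polynomial F) (x : W) :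
    (Polynomial.aeval (τ.restrict hW) p x : V) = Polynomial.aeval τ p (x : V) := by
  induction p using Polynomial.induction_on' generalizing x with
  | add p q hp hq => simp [hp, hq]
  | monomial n a =>
    have h : ((τ.restrict hW ^ n) x : V) = (τ ^ n) (x : V) := by
      rw [Module.End.pow_restrict n hW]; rfl
    simp [Polynomial.aeval_monomial, h]

lemma aeval_mapQ_mk {F V : Type*} [Field F] [AddCommGroup V] [Module F V]
    (τ : V →ₗ[F] V) (K : Submodule F V) (hK : K ≤ K.comap τ) (p : Polynomial F) (x : V) :
    Polynomial.aeval (K.mapQ K τ hK) p (K.mkQ x) = K.mkQ (Polynomial.aeval τ p x) := by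
  induction p using Polynomial.induction_on' with
  | add p q hp hq => simp only [map_add, LinearMap.add_apply, hp, hq]
  | monomial n a =>
    have h : (K.mapQ K τ hK ^ n) (Submodule.Quotient.mk x) = Submodule.Quotient.mk ((τ ^ n) x) := by
      rw [← Submodule.mapQ_pow K hK n]; rfl
    simp [Polynomial.aeval_monomial, h]

/-- Let `F` be a field, `V` a finite-dimensional `F`-vector space and
`τ : V → V` an `F`-linear endomorphism whose minimal polynomial equals its characteristic
polynomial.  Then every `τ`-invariant subspace `W ⊆ V` is of the form `W = ker q(τ)` for some
monic polynomial `q ∈ F[X]` dividing the characteristic polynomial of `τ`. -/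
theorem stmt4 {F V : Type*} [Field F] [AddCommGroup V] [Module F V] [FiniteDimensional F V]
    (τ : V →ₗ[F] V) (hcyc : minpoly F τ = LinearMap.charpoly τ)
    (W : Submodule F V) (hW : ∀ x ∈ W, τ x ∈ W) :
    ∃ q : Polynomial F, q.Monic ∧ q ∣ LinearMap.charpoly τ ∧
      W = LinearMap.ker (Polynomial.aeval τ q) := by
  set q := (τ.restrict hW).charpoly with hq
  have hqm : q.Monic := LinearMap.charpoly_monic _
  set K := LinearMap.ker (Polynomial.aeval τ q) with hKdef
  have hWK : W ≤ K := by
    intro x hx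
    rw [hKdef, LinearMap.mem_ker, ← aeval_restrict_coe τ W hW q ⟨x, hx⟩, hq,
      LinearMap.aeval_self_charpoly]
    rfl
  have hK : K ≤ K.comap τ := by
    intro x hx
    rw [hKdef, LinearMap.mem_ker] at hx
    have hcomm : Polynomial.aeval τ q * τ = τ * Polynomial.aeval τ q := by
      simpa using ((Polynomial.commute_X q).map (Polynomial.aeval τ)).symm.eq
    rw [Submodule.mem_comap, hKdef, LinearMap.mem_ker, ← Module.End.mul_apply, hcomm,
      Module.End.mul_apply, hx, map_zero]
  set s := (K.mapQ K τ hK).charpoly with hs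
  have hsm : s.Monic := LinearMap.charpoly_monic _
  have hqs : Polynomial.aeval τ (q * s) = 0 := by
    ext x
    have h := aeval_mapQ_mk τ K hK s x
    rw [hs, LinearMap.aeval_self_charpoly, LinearMap.zero_apply, eq_comm, Submodule.mkQ_apply,
      Submodule.Quotient.mk_eq_zero, ← hs] at h
    rw [map_mul, Module.End.mul_apply]
    exact h
  have hdvd : τ.charpoly ∣ q * s := hcyc ▸ minpoly.dvd F τ hqs
  have hdeg : (q * s).natDegree = Module.finrank F W + Module.finrank F (V ⧸ K) := by
    rw [hqm.natDegree_mul hsm, hq, hs, LinearMap.charpoly_natDegree, LinearMap.charpoly_natDegree]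
  have hle := Polynomial.natDegree_le_of_dvd hdvd (hqm.mul hsm).ne_zero
  rw [hdeg, LinearMap.charpoly_natDegree] at hle
  have hsum := K.finrank_quotient_add_finrank
  have hWeq : W = K := Submodule.eq_of_le_of_finrank_le hWK (by omega)
  have hfin : Module.finrank F W = Module.finrank F K := by rw [← hWeq]
  refine ⟨q, hqm, ?_, hWeq⟩
  have heq : q * s = τ.charpoly :=
    Polynomial.eq_of_monic_of_dvd_of_natDegree_le τ.charpoly_monic (hqm.mul hsm) hdvd
      (by rw [hdeg, LinearMap.charpoly_natDegree]; omega)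
  exact ⟨s, heq.symm⟩
end

section
/- Let m ≥ 1 and let λ, b, ρ be m×m real matrices such that λ is invertible and upper triangular (λ_{kℓ} = 0 whenever k > ℓ), b is diagonal with all diagonal entries nonzero, and ρ is symmetric. Set β = b ρ b^{−1} and η = λ β λ^{−1}. Fix indices i, j ∈ {1,…,m}. Then the following are equivalent: (a) η_{kℓ} = 0 for every pair (k,ℓ) with k ≥ i and ℓ ≤ j; (b) β_{kℓ} = 0 and β_{ℓk} = 0 for every pair (k,ℓ) with k ≤ j and ℓ ≥ i. -/
/-!
Call the set of positions `(k, ℓ)` with `k ≥ i` and `ℓ ≤ j` the lower-left corner. The matrices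
vanishing on this corner are exactly those mapping the span of the first `j` basis vectors into the
span of the first `i - 1`. Upper triangular matrices preserve both spans, so multiplying by them on
either side preserves vanishing on the corner (`corner_zero_mul_mul`). Since `L` and `L⁻¹` are both
upper triangular, `η = L β L⁻¹` vanishes on the corner iff `β = L⁻¹ η L` does. Finally
`β k ℓ = b k k * ρ k ℓ * (b ℓ ℓ)⁻¹` with `ρ` symmetric, so the zero pattern of `β` is symmetric
(`conj_diagonal_apply_eq_zero_iff`), which gives the vanishing at the transposed positions.
-/

/-- Multiplication by upper triangular matrices on both sides preserves vanishing on the lower-left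
corner: a nonzero term `U k p * A p q * V q ℓ` needs `k ≤ p` and `q ≤ ℓ`, so `(p, q)` stays in the
corner. -/
theorem corner_zero_mul_mul {m : ℕ} {U V A : Matrix (Fin m) (Fin m) ℝ}
    (hU : ∀ k ℓ : Fin m, ℓ < k → U k ℓ = 0) (hV : ∀ k ℓ : Fin m, ℓ < k → V k ℓ = 0)
    {i j : Fin m} (hA : ∀ k ℓ : Fin m, i ≤ k → ℓ ≤ j → A k ℓ = 0) :
    ∀ k ℓ : Fin m, i ≤ k → ℓ ≤ j → (U * A * V) k ℓ = 0 := by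
  intro k ℓ hk hℓ
  rw [Matrix.mul_apply]
  refine Finset.sum_eq_zero fun q _ => ?_
  rcases lt_or_ge ℓ q with hq | hq
  · rw [hV q ℓ hq, mul_zero]
  · rw [Matrix.mul_apply, Finset.sum_eq_zero, zero_mul]
    intro p _
    rcases lt_or_ge p k with hp | hp
    · rw [hU k p hp, zero_mul]
    · rw [hA p q (hk.trans hp) (hq.trans hℓ), mul_zero]

theorem conj_diagonal_apply_eq_zero_iff {m : ℕ} {b ρ : Matrix (Fin m) (Fin m) ℝ}
    (hbdiag : ∀ k ℓ : Fin m, k ≠ ℓ → b k ℓ = 0) (hb0 : ∀ k : Fin m, b k k ≠ 0) (k ℓ : Fin m) :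
    (b * ρ * b⁻¹) k ℓ = 0 ↔ ρ k ℓ = 0 := by
  have hb : b = Matrix.diagonal fun k => b k k := by
    ext p q
    by_cases h : p = q
    · subst h
      simp
    · rw [hbdiag p q h, Matrix.diagonal_apply_ne _ h]
  have hbinv : b⁻¹ = Matrix.diagonal fun k => (b k k)⁻¹ := by
    apply Matrix.inv_eq_right_inv
    conv_lhs => rw [hb]
    simp [Matrix.diagonal_mul_diagonal, hb0]
  rw [hbinv, Matrix.mul_diagonal, hb, Matrix.diagonal_mul]
  simp [hb0]


/-- Lemma 7.17, `maxfliplem`, of the paper.  Let `L`, `b`, `ρ` be `m × m`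
real matrices with `L` invertible and upper triangular (all entries strictly below the
diagonal vanish), `b` diagonal with nonzero diagonal entries, and `ρ` symmetric.  Set
`β = b ρ b⁻¹` and `η = L β L⁻¹`.  Fix indices `i, j`.  Then `η_{kℓ} = 0` for every pair
`(k,ℓ)` with `k ≥ i` and `ℓ ≤ j` if and only if `β_{kℓ} = 0` and `β_{ℓk} = 0` for every pair
`(k,ℓ)` with `k ≤ j` and `ℓ ≥ i`. -/
theorem stmt5 (m : ℕ) (hm : 1 ≤ m) (L b ρ : Matrix (Fin m) (Fin m) ℝ)
    (hLinv : IsUnit L.det)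
    (hLtri : ∀ k ℓ : Fin m, ℓ < k → L k ℓ = 0)
    (hbdiag : ∀ k ℓ : Fin m, k ≠ ℓ → b k ℓ = 0)
    (hb0 : ∀ k : Fin m, b k k ≠ 0)
    (hρ : ρ.IsSymm)
    (i j : Fin m) :
    (∀ k ℓ : Fin m, i ≤ k → ℓ ≤ j → (L * (b * ρ * b⁻¹) * L⁻¹) k ℓ = 0) ↔
      (∀ k ℓ : Fin m, k ≤ j → i ≤ ℓ →
        (b * ρ * b⁻¹) k ℓ = 0 ∧ (b * ρ * b⁻¹) ℓ k = 0) := by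
  have hLinvtri : ∀ k ℓ : Fin m, ℓ < k → L⁻¹ k ℓ = 0 := by
    haveI : Invertible L := Matrix.invertibleOfIsUnitDet L hLinv
    have hL : L.BlockTriangular id := fun k ℓ h => hLtri k ℓ h
    exact fun k ℓ h => Matrix.blockTriangular_inv_of_blockTriangular hL h
  have hβ := conj_diagonal_apply_eq_zero_iff (ρ := ρ) hbdiag hb0
  generalize b * ρ * b⁻¹ = β at hβ ⊢
  have hsymm : ∀ k ℓ : Fin m, β k ℓ = 0 → β ℓ k = 0 := by
    intro k ℓ h
    rw [hβ] at h ⊢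
    rwa [hρ.apply]
  constructor
  · intro h k ℓ hk hℓ
    have hconj : L⁻¹ * (L * β * L⁻¹) * L = β := by
      rw [Matrix.mul_assoc L, Matrix.nonsing_inv_mul_cancel_left _ _ hLinv,
        Matrix.nonsing_inv_mul_cancel_right _ _ hLinv]
    have hcorner := corner_zero_mul_mul hLinvtri hLtri h ℓ k hℓ hk
    rw [hconj] at hcorner
    exact ⟨hsymm _ _ hcorner, hcorner⟩
  · intro h
    exact corner_zero_mul_mul hLtri hLinvtri fun k ℓ hk hℓ => (h ℓ k hℓ hk).2
end

section
/- Let F be a field, V a finite-dimensional F-vector space equipped with a symmetric bilinear form Q, and E ⊆ End_F(V) a unital F-subalgebra. Let e ∈ E be an idempotent (e∘e = e) which is central in E, let W = e(V) be its image, and let W^⊥ = {v ∈ V : Q(w,v) = 0 for all w ∈ W}. Assume that V = W ⊕ W^⊥ (internal direct sum), and that the projection f of V onto W^⊥ along W (the idempotent with image W^⊥ and kernel W) belongs to E. Then e is self-adjoint for Q: Q(e x, y) = Q(x, e y) for all x, y ∈ V. -/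
/-- linear-algebra content of Lemma 7.18, `idemselfadjoint`, of the paper.
Let `F` be a field, `V` a finite-dimensional `F`-vector space with a symmetric bilinear form
`Q`, and `E ⊆ End_F(V)` a unital `F`-subalgebra.  Let `e ∈ E` be an idempotent which is
central in `E`, let `W = e(V)` and `W^⊥` its `Q`-orthogonal complement.  Assume `V = W ⊕ W^⊥`
and that the projection `f` of `V` onto `W^⊥` along `W` (the idempotent with image `W^⊥` and
kernel `W`) belongs to `E`.  Then `e` is self-adjoint for `Q`. -/
theorem stmt6 {F V : Type*} [Field F] [AddCommGroup V] [Module F V] [FiniteDimensional F V]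
    (Q : LinearMap.BilinForm F V) (hQsymm : ∀ x y : V, Q x y = Q y x)
    (E : Subalgebra F (Module.End F V))
    (e : Module.End F V) (he : e ∈ E) (hidem : e * e = e)
    (hcentral : ∀ g ∈ E, e * g = g * e)
    (hcompl : IsCompl (LinearMap.range e)
      (LinearMap.BilinForm.orthogonal Q (LinearMap.range e)))
    (f : Module.End F V) (hf : f ∈ E) (hfidem : f * f = f)
    (hfrange : LinearMap.range f = LinearMap.BilinForm.orthogonal Q (LinearMap.range e))
    (hfker : LinearMap.ker f = LinearMap.range e) :
    ∀ x y : V, Q (e x) y = Q x (e y) := by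
  -- Centrality gives `e * f = f * e`, which vanishes because `ker f = range e`; so `e` kills `W^⊥`.
  have hef (v : V) : e (f v) = 0 := by
    have hfe : f (e v) = 0 := by
      rw [← LinearMap.mem_ker, hfker]
      exact LinearMap.mem_range_self e v
    rw [← Module.End.mul_apply, hcentral f hf, Module.End.mul_apply, hfe]
  -- As `v - f v` lies in `ker f = W`, where `e` is the identity, `e` and `f` are complementary.
  have hsum (v : V) : v = e v + f v := by
    have hmem : v - f v ∈ LinearMap.range e := by
      rw [← hfker, LinearMap.mem_ker, map_sub, ← Module.End.mul_apply f f, hfidem, sub_self]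
    obtain ⟨w, hw⟩ := hmem
    have h : e (v - f v) = v - f v := by
      rw [← hw, ← Module.End.mul_apply, hidem]
    rw [map_sub, hef, sub_zero] at h
    rw [h, sub_add_cancel]
  have horth (x y : V) : Q (e x) (f y) = 0 := by
    have hy : f y ∈ LinearMap.BilinForm.orthogonal Q (LinearMap.range e) :=
      hfrange ▸ LinearMap.mem_range_self f y
    exact LinearMap.BilinForm.mem_orthogonal_iff.mp hy (e x) (LinearMap.mem_range_self e x)
  -- Both sides equal `Q (e x) (e y)`.
  intro x y
  calc Q (e x) y = Q (e x) (e y + f y) := by rw [← hsum y]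
    _ = Q (e x + f x) (e y) := by
      rw [map_add, map_add, LinearMap.add_apply, horth, hQsymm (f x), horth]
    _ = Q x (e y) := by rw [← hsum x]
end
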